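/- arXiv:2211.14374 — 5 statements merged into one kernel-verified Lean document; each statement's English description precedes it below -/
import Mathlib

section
/- Let M and N be weight sequences and assume that N is log-convex. Then the following are equivalent: (i) there exists A ≥ 1 such that N_j ≤ A·M_j for all j ∈ ℕ; (ii) v_M ≼ v_N, i.e. there exists C ≥ 1 such that v_N(t) ≤ C·v_M(t) for all t ≥ 0. -/
open Filter Set

/-- The associated weight function `ω_M(t) = sup_j log(t^j / M_j)` for `t ≠ 0`, `ω_M(0) = 0`. -/
noncomputable def omegaM (M : ℕ → ℝ) (t : ℝ) : ℝ :=
  if t = 0 then 0 else ⨆ j : ℕ, Real.log (t ^ j / M j)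

/-- `v_M(t) = exp(-ω_M(t))`. -/
noncomputable def vM (M : ℕ → ℝ) (t : ℝ) : ℝ :=
  Real.exp (-(omegaM M t))

/-- `v_{M,c}(t) = exp(-ω_M(c·t))`. -/
noncomputable def vMc (M : ℕ → ℝ) (c t : ℝ) : ℝ :=
  Real.exp (-(omegaM M (c * t)))

/-- `v_M^c(t) = exp(-c·ω_M(t))`. -/
noncomputable def vMpow (M : ℕ → ℝ) (c t : ℝ) : ℝ :=
  Real.exp (-(c * omegaM M t))

/-- A weight sequence: positive, `M_0 = 1`, `(M_j)^{1/j} → ∞`. -/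
def WeightSeq (M : ℕ → ℝ) : Prop :=
  (∀ j, 0 < M j) ∧ M 0 = 1 ∧
    Tendsto (fun j : ℕ => (M j) ^ (1 / (j : ℝ))) atTop atTop

/-- Log-convexity: `M_j² ≤ M_{j-1}·M_{j+1}` for `j ≥ 1`. -/
def LogConvexSeq (M : ℕ → ℝ) : Prop :=
  ∀ j : ℕ, 1 ≤ j → (M j) ^ 2 ≤ M (j - 1) * M (j + 1)

/-- The class `LC`: normalized log-convex weight sequences. -/
def LCset (M : ℕ → ℝ) : Prop :=
  WeightSeq M ∧ LogConvexSeq M ∧ 1 ≤ M 1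

/-- Weighted space of entire functions with `sup |f(z)|·v(|z|) < ∞`. -/
def Hinf (v : ℝ → ℝ) : Set (ℂ → ℂ) :=
  {f | Differentiable ℂ f ∧
    ∃ C : ℝ, ∀ z : ℂ, ‖f z‖ * v ‖z‖ ≤ C}

/-- The weighted sup-norm `‖f‖_v`. -/
noncomputable def wnorm (v : ℝ → ℝ) (f : ℂ → ℂ) : ℝ :=
  ⨆ z : ℂ, ‖f z‖ * v ‖z‖

/-- A weight: strictly positive, continuous, non-increasing and rapidly
decreasing on `[0,∞)`. -/
def IsWeight (v : ℝ → ℝ) : Prop :=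
  (∀ t : ℝ, 0 ≤ t → 0 < v t) ∧ ContinuousOn v (Set.Ici 0) ∧
    AntitoneOn v (Set.Ici 0) ∧
    ∀ k : ℕ, Tendsto (fun t : ℝ => t ^ k * v t) atTop (nhds 0)

/-- A normalized weight: `v ≡ 1` on `[0,1]`. -/
def NormalizedWeight (v : ℝ → ℝ) : Prop :=
  ∀ t : ℝ, 0 ≤ t → t ≤ 1 → v t = 1

/-- A (log-)convex weight: `t ↦ -log v(eᵗ)` is convex on `ℝ`. -/
def ConvexWeight (v : ℝ → ℝ) : Prop :=
  ConvexOn ℝ Set.univ fun t : ℝ => -Real.log (v (Real.exp t))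

/-- Moderate growth for a weight: `v(H·t) ≤ e^H · v(t)²`. -/
def ModerateGrowthW (v : ℝ → ℝ) : Prop :=
  ∃ H : ℝ, 1 ≤ H ∧ ∀ t : ℝ, 0 ≤ t → v (H * t) ≤ Real.exp H * (v t) ^ 2

/-- Moderate growth (mg) for a sequence: `M_{j+k} ≤ C^{j+k}·M_j·M_k`. -/
def MGseq (M : ℕ → ℝ) : Prop :=
  ∃ C : ℝ, 1 ≤ C ∧ ∀ j k : ℕ, M (j + k) ≤ C ^ (j + k) * M j * M k

/-- The associated weight sequence `M^v_j = sup_{t>0} t^j·v(t)`. -/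
noncomputable def assocSeq (v : ℝ → ℝ) (j : ℕ) : ℝ :=
  ⨆ t : Set.Ioi (0 : ℝ), (t : ℝ) ^ j * v t

/-- The unit ball `B_{1/v}(ℂ)` of entire functions bounded by `1/v`. -/
def BClass (v : ℝ → ℝ) : Set (ℂ → ℂ) :=
  {f | Differentiable ℂ f ∧ ∀ z : ℂ, ‖f z‖ ≤ 1 / v ‖z‖}

/-- The associated growth condition `w̃_v(z) = sup{|f(z)| : f ∈ B_{1/v}}`. -/
noncomputable def wTilde (v : ℝ → ℝ) (z : ℂ) : ℝ :=
  sSup {x : ℝ | ∃ f ∈ BClass v, x = ‖f z‖}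

/-- The associated weight `ṽ = 1/w̃_v`, as a function of `t = |z|`. -/
noncomputable def vTilde (v : ℝ → ℝ) (t : ℝ) : ℝ :=
  1 / wTilde v (t : ℂ)

/-- An essential weight: `v ∼ ṽ`. -/
def Essential (v : ℝ → ℝ) : Prop :=
  ∃ C : ℝ, 1 ≤ C ∧ ∀ t : ℝ, 0 ≤ t →
    v t ≤ C * vTilde v t ∧ vTilde v t ≤ C * v t

/-- `P_v(t) = sup_j t^j/‖z^j‖_v`. -/
noncomputable def Pfun (v : ℝ → ℝ) (t : ℝ) : ℝ :=
  ⨆ j : ℕ, t ^ j / wnorm v fun z : ℂ => z ^ j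

/-- The convolved sequence `(M⋆N)_j = min_{0≤k≤j} M_k·N_{j-k}`. -/
noncomputable def convSeq (M N : ℕ → ℝ) (j : ℕ) : ℝ :=
  (Finset.range (j + 1)).inf' Finset.nonempty_range_add_one fun k => M k * N (j - k)

/-!
Up to the exponential, `ω_M` is a Legendre transform: for `t > 0` one has
`v_M(t) = inf_j M_j / t^j`, so a bound `N ≤ A M` passes to the infima. Conversely, for log-convex
`N` the infimum defining `v_N(t)` is attained at index `j` when `t = N_{j+1} / N_j`, because the
quotients `N_{k+1} / N_k` increase with `k`. At this `t` one gets
`N_j = t^j v_N(t) ≤ C t^j v_M(t) ≤ C M_j`.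
-/

section AssociatedWeight

variable {M : ℕ → ℝ} {t : ℝ}

theorem vM_zero (M : ℕ → ℝ) : vM M 0 = 1 := by
  simp [vM, omegaM]

theorem vM_of_pos (M : ℕ → ℝ) (ht : 0 < t) :
    vM M t = Real.exp (-⨆ j : ℕ, Real.log (t ^ j / M j)) := by
  rw [vM, omegaM, if_neg ht.ne']

theorem le_vM {c : ℝ} (hpos : ∀ j, 0 < M j) (ht : 0 < t) (hc : 0 < c)
    (h : ∀ j, t ^ j * c ≤ M j) : c ≤ vM M t := by
  rw [vM_of_pos M ht, ← Real.log_le_iff_le_exp hc, le_neg, ← Real.log_inv]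
  refine ciSup_le fun j => Real.log_le_log (div_pos (pow_pos ht j) (hpos j)) ?_
  rw [div_le_iff₀ (hpos j), inv_mul_eq_div, le_div_iff₀ hc]
  exact h j

theorem bddAbove_range_log_pow_div (hnonneg : ∀ j, 0 ≤ M j)
    (hlim : Tendsto (fun j : ℕ => M j ^ (1 / (j : ℝ))) atTop atTop) (ht : 0 ≤ t) :
    BddAbove (range fun j : ℕ => Real.log (t ^ j / M j)) := by
  refine IsBoundedUnder.bddAbove_range ⟨0, eventually_map.2 ?_⟩
  filter_upwards [hlim.eventually_ge_atTop t, eventually_ne_atTop 0] with j htj hj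
  have hpow : t ^ j ≤ M j := by
    calc t ^ j ≤ (M j ^ (1 / (j : ℝ))) ^ j := pow_le_pow_left₀ ht htj j
      _ = M j := by rw [one_div, Real.rpow_inv_natCast_pow (hnonneg j) hj]
  exact Real.log_nonpos (div_nonneg (pow_nonneg ht j) (hnonneg j))
    (div_le_one_of_le₀ hpow (hnonneg j))

theorem WeightSeq.pow_mul_vM_le (hM : WeightSeq M) (ht : 0 < t) (j : ℕ) :
    t ^ j * vM M t ≤ M j := by
  obtain ⟨hpos, -, hlim⟩ := hM
  have hbdd := bddAbove_range_log_pow_div (fun k => (hpos k).le) hlim ht.le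
  have hle : t ^ j / M j ≤ Real.exp (⨆ k : ℕ, Real.log (t ^ k / M k)) :=
    (Real.log_le_iff_le_exp (div_pos (pow_pos ht j) (hpos j))).1 (le_ciSup hbdd j)
  rw [vM_of_pos M ht, Real.exp_neg, ← div_eq_mul_inv, div_le_iff₀ (Real.exp_pos _)]
  rwa [div_le_iff₀' (hpos j)] at hle

end AssociatedWeight

section LogConvex

variable {N : ℕ → ℝ}

theorem LogConvexSeq.monotone_succ_div (hlc : LogConvexSeq N) (hpos : ∀ j, 0 < N j) :
    Monotone fun j => N (j + 1) / N j := by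
  refine monotone_nat_of_le_succ fun j => ?_
  rw [div_le_div_iff₀ (hpos j) (hpos (j + 1)), ← sq, mul_comm]
  exact hlc (j + 1) j.succ_pos

theorem LogConvexSeq.mul_succ_div_pow_le (hlc : LogConvexSeq N) (hpos : ∀ j, 0 < N j)
    (j k : ℕ) : N j * (N (j + 1) / N j) ^ k ≤ N k * (N (j + 1) / N j) ^ j := by
  have hmono := hlc.monotone_succ_div hpos
  set r := N (j + 1) / N j
  have hr0 : 0 < r := div_pos (hpos _) (hpos _)
  rcases le_total j k with hjk | hkj
  · induction k, hjk using Nat.le_induction with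
    | base => exact le_rfl
    | succ k hjk ih =>
      have hstep : N k * r ≤ N (k + 1) := (le_div_iff₀' (hpos k)).1 (hmono hjk)
      calc N j * r ^ (k + 1) = N j * r ^ k * r := by ring
        _ ≤ N k * r ^ j * r := by gcongr
        _ = N k * r * r ^ j := by ring
        _ ≤ N (k + 1) * r ^ j := by gcongr
  · induction hkj using Nat.decreasingInduction with
    | self => exact le_rfl
    | of_succ k hkj ih =>
      have hstep : N (k + 1) ≤ N k * r := (div_le_iff₀' (hpos k)).1 (hmono hkj.le)
      refine le_of_mul_le_mul_right ?_ hr0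
      calc N j * r ^ k * r = N j * r ^ (k + 1) := by ring
        _ ≤ N (k + 1) * r ^ j := ih
        _ ≤ N k * r * r ^ j := by gcongr
        _ = N k * r ^ j * r := by ring

theorem LogConvexSeq.exists_le_pow_mul_vM (hlc : LogConvexSeq N) (hpos : ∀ j, 0 < N j)
    (j : ℕ) : ∃ t : ℝ, 0 < t ∧ N j ≤ t ^ j * vM N t := by
  have ht : 0 < N (j + 1) / N j := div_pos (hpos _) (hpos _)
  refine ⟨N (j + 1) / N j, ht, ?_⟩
  rw [← div_le_iff₀' (pow_pos ht j)]
  refine le_vM hpos ht (div_pos (hpos j) (pow_pos ht j)) fun k => ?_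
  rw [mul_div_assoc', div_le_iff₀ (pow_pos ht j), mul_comm]
  exact hlc.mul_succ_div_pow_le hpos j k

end LogConvex

section Comparison

variable {M N : ℕ → ℝ}

theorem vM_le_mul_vM_of_le_mul {A t : ℝ} (hM : ∀ j, 0 < M j) (hN : WeightSeq N) (hA : 0 < A)
    (hle : ∀ j, N j ≤ A * M j) (ht : 0 < t) : vM N t ≤ A * vM M t := by
  rw [← div_le_iff₀' hA]
  refine le_vM hM ht (div_pos (Real.exp_pos _) hA) fun j => ?_
  rw [mul_div_assoc', div_le_iff₀' hA]
  exact (hN.pow_mul_vM_le ht j).trans (hle j)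

theorem le_mul_of_vM_le_mul_vM {C : ℝ} (hM : WeightSeq M) (hN : ∀ j, 0 < N j)
    (hlc : LogConvexSeq N) (hC : 0 ≤ C) (hle : ∀ t, 0 < t → vM N t ≤ C * vM M t) (j : ℕ) :
    N j ≤ C * M j := by
  obtain ⟨t, ht, hNt⟩ := hlc.exists_le_pow_mul_vM hN j
  calc N j ≤ t ^ j * vM N t := hNt
    _ ≤ t ^ j * (C * vM M t) := by gcongr; exact hle t ht
    _ = C * (t ^ j * vM M t) := by ring
    _ ≤ C * M j := by gcongr; exact hM.pow_mul_vM_le ht j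

end Comparison

/-- Proposition: for weight sequences `M`, `N` with `N` log-convex,
`N_j ≤ A·M_j` for all `j` is equivalent to `v_M ≼ v_N`. -/
theorem stmt0 (M N : ℕ → ℝ) (hM : WeightSeq M) (hN : WeightSeq N)
    (hNlc : LogConvexSeq N) :
    (∃ A : ℝ, 1 ≤ A ∧ ∀ j : ℕ, N j ≤ A * M j) ↔
      (∃ C : ℝ, 1 ≤ C ∧ ∀ t : ℝ, 0 ≤ t → vM N t ≤ C * vM M t) := by
  constructor
  · rintro ⟨A, hA, hle⟩
    refine ⟨A, hA, fun t ht => ?_⟩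
    rcases ht.eq_or_lt with rfl | ht
    · simpa only [vM_zero, mul_one] using hA
    · exact vM_le_mul_vM_of_le_mul hM.1 hN (zero_lt_one.trans_le hA) hle ht
  · rintro ⟨C, hC, hle⟩
    exact ⟨C, hC, le_mul_of_vM_le_mul_vM hM hN.1 hNlc (zero_le_one.trans hC)
      fun t ht => hle t ht.le⟩
end

section
/- Let M be a log-convex weight sequence. Then for all d > c > 0, the quotient v_{M,c}(t)/v_{M,d}(t) tends to +∞ as t → +∞; equivalently, ω_M(d·t) − ω_M(c·t) → +∞ as t → +∞. -/
open Filter Set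

/-! In the variable `x = log t` the weight function `x ↦ ω_M(eˣ) = sup_j (j x - log M_j)` is a
supremum of affine functions of slopes `j = 0, 1, 2, …`, hence convex and growing faster than any
linear function. The secant slopes of a convex function increase, so those over intervals of the
fixed length `h = log (d / c)` eventually dominate the secant slopes from a fixed base point, which
tend to infinity. -/

section Convex

theorem convexOn_ciSup {ι E : Type*} [Nonempty ι] [AddCommMonoid E] [SMul ℝ E] {s : Set E}
    {f : ι → E → ℝ} (hf : ∀ i, ConvexOn ℝ s (f i))
    (hbdd : ∀ x ∈ s, BddAbove (range fun i => f i x)) :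
    ConvexOn ℝ s fun x => ⨆ i, f i x := by
  refine ⟨(hf (Classical.arbitrary ι)).1, fun x hx y hy a b ha hb hab => ciSup_le fun i => ?_⟩
  calc f i (a • x + b • y)
      ≤ a • f i x + b • f i y := (hf i).2 hx hy ha hb hab
    _ ≤ a • (⨆ i, f i x) + b • ⨆ i, f i y := by
      gcongr
      exacts [le_ciSup (hbdd x hx) i, le_ciSup (hbdd y hy) i]

theorem tendsto_slope_atTop_of_forall_mul_sub_le {f : ℝ → ℝ}
    (hf : ∀ n : ℕ, ∃ C, ∀ x, n * x - C ≤ f x) (a : ℝ) :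
    Tendsto (slope f a) atTop atTop := by
  refine tendsto_atTop.2 fun b => ?_
  obtain ⟨n, hn⟩ := exists_nat_gt b
  obtain ⟨C, hC⟩ := hf n
  have hlim : Tendsto (fun x => (n - b) * x) atTop atTop :=
    tendsto_id.const_mul_atTop (sub_pos.2 hn)
  filter_upwards [eventually_gt_atTop a, hlim.eventually_ge_atTop (C + f a - b * a)] with x hax hx
  rw [slope_def_field, le_div_iff₀ (sub_pos.2 hax)]
  linarith [hC x]

theorem tendsto_add_sub_atTop_of_convexOn {f : ℝ → ℝ} {a h : ℝ} (hf : ConvexOn ℝ (Ici a) f)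
    (hslope : Tendsto (slope f a) atTop atTop) (hh : 0 < h) :
    Tendsto (fun x => f (x + h) - f x) atTop atTop := by
  refine tendsto_atTop_mono' _ ?_ (hslope.const_mul_atTop hh)
  filter_upwards [eventually_gt_atTop a] with x hax
  have hsecant : slope f a x ≤ (f (x + h) - f x) / (x + h - x) := by
    rw [slope_def_field]
    exact hf.slope_mono_adjacent self_mem_Ici (hax.le.trans (by linarith)) hax (by linarith)
  rwa [add_sub_cancel_left, le_div_iff₀' hh] at hsecant

end Convex

section WeightFunction

variable {M : ℕ → ℝ}

theorem omegaM_exp (hpos : ∀ j, 0 < M j) (x : ℝ) :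
    omegaM M (Real.exp x) = ⨆ j : ℕ, (j * x - Real.log (M j)) := by
  rw [omegaM, if_neg (Real.exp_ne_zero x)]
  congr with j
  rw [Real.log_div (by positivity) (hpos j).ne', Real.log_pow, Real.log_exp]

theorem vMc_div_vMc (c d t : ℝ) :
    vMc M c t / vMc M d t = Real.exp (omegaM M (d * t) - omegaM M (c * t)) := by
  rw [vMc, vMc, ← Real.exp_sub, neg_sub_neg]

namespace WeightSeq

theorem tendsto_log_div (hM : WeightSeq M) :
    Tendsto (fun j : ℕ => Real.log (M j) / j) atTop atTop := by
  refine (Real.tendsto_log_atTop.comp hM.2.2).congr fun j => ?_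
  rw [Function.comp_apply, Real.log_rpow (hM.1 j), one_div_mul_eq_div]

theorem bddAbove_range_mul_sub_log (hM : WeightSeq M) (x : ℝ) :
    BddAbove (range fun j : ℕ => j * x - Real.log (M j)) := by
  refine IsBoundedUnder.bddAbove_range (isBoundedUnder_of_eventually_le (a := 0) ?_)
  filter_upwards [hM.tendsto_log_div.eventually_ge_atTop x, eventually_gt_atTop 0] with j hx hj
  rwa [sub_nonpos, ← le_div_iff₀' (Nat.cast_pos.2 hj)]

theorem convexOn_omegaM_exp (hM : WeightSeq M) :
    ConvexOn ℝ univ fun x => omegaM M (Real.exp x) := by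
  simp only [omegaM_exp hM.1]
  refine convexOn_ciSup (fun j => ?_) fun x _ => hM.bddAbove_range_mul_sub_log x
  exact ((LinearMap.mul ℝ ℝ j).convexOn convex_univ).sub (concaveOn_const _ convex_univ)

theorem mul_sub_log_le_omegaM_exp (hM : WeightSeq M) (j : ℕ) (x : ℝ) :
    j * x - Real.log (M j) ≤ omegaM M (Real.exp x) := by
  rw [omegaM_exp hM.1]
  exact le_ciSup (hM.bddAbove_range_mul_sub_log x) j

theorem tendsto_omegaM_exp_add_sub (hM : WeightSeq M) {h : ℝ} (hh : 0 < h) :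
    Tendsto (fun x => omegaM M (Real.exp (x + h)) - omegaM M (Real.exp x)) atTop atTop :=
  tendsto_add_sub_atTop_of_convexOn
    (hM.convexOn_omegaM_exp.subset (subset_univ (Ici 0)) (convex_Ici 0))
    (tendsto_slope_atTop_of_forall_mul_sub_le
      (fun j => ⟨Real.log (M j), hM.mul_sub_log_le_omegaM_exp j⟩) 0) hh

theorem tendsto_omegaM_mul_sub_omegaM_mul (hM : WeightSeq M) {c d : ℝ} (hc : 0 < c) (hcd : c < d) :
    Tendsto (fun t => omegaM M (d * t) - omegaM M (c * t)) atTop atTop := by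
  have hlog : Tendsto (fun t => Real.log (c * t)) atTop atTop :=
    Real.tendsto_log_atTop.comp (tendsto_id.const_mul_atTop hc)
  have hh : 0 < Real.log (d / c) := Real.log_pos ((one_lt_div hc).2 hcd)
  refine ((hM.tendsto_omegaM_exp_add_sub hh).comp hlog).congr' ?_
  filter_upwards [eventually_gt_atTop 0] with t ht
  have hct : 0 < c * t := mul_pos hc ht
  have hdt : c * t * (d / c) = d * t := by field_simp
  rw [Function.comp_apply, Real.exp_add, Real.exp_log hct,
    Real.exp_log (div_pos (hc.trans hcd) hc), hdt]

end WeightSeq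

end WeightFunction

theorem stmt1_general (M : ℕ → ℝ) (hM : WeightSeq M) (c d : ℝ) (hc : 0 < c) (hcd : c < d) :
    Tendsto (fun t : ℝ => vMc M c t / vMc M d t) atTop atTop ∧
      Tendsto (fun t : ℝ => omegaM M (d * t) - omegaM M (c * t)) atTop atTop := by
  have homega := hM.tendsto_omegaM_mul_sub_omegaM_mul hc hcd
  simp only [vMc_div_vMc]
  exact ⟨Real.tendsto_exp_atTop.comp homega, homega⟩

/-- Lemma: for a log-convex weight sequence `M` and `d > c > 0`,
`v_{M,c}(t)/v_{M,d}(t) → ∞`; equivalently `ω_M(d·t) - ω_M(c·t) → ∞`. -/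
theorem stmt1 (M : ℕ → ℝ) (hM : WeightSeq M) (hMlc : LogConvexSeq M) :
    ∀ c d : ℝ, 0 < c → c < d →
      Tendsto (fun t : ℝ => vMc M c t / vMc M d t) atTop atTop ∧
      Tendsto (fun t : ℝ => omegaM M (d * t) - omegaM M (c * t)) atTop atTop :=
  stmt1_general M hM
end

section
/- Let M be a weight sequence and c > 0. Then the power series θ_{M,c}(z) := Σ_{j≥0} (c·z)^j/(2^j·M_j) converges for every z ∈ ℂ and defines an entire function satisfying |θ_{M,c}(z)| ≤ 2·exp(ω_M(c·|z|)) for all z ∈ ℂ (so θ_{M,c} ∈ H^∞_{v_{M,c}}(ℂ) with ‖θ_{M,c}‖_{v_{M,c}} ≤ 2), and θ_{M,c}(t) ≥ exp(ω_M(c·t/2)) for all real t ≥ 0. -/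
open Filter Set

/-! On `[0, ∞)` the function `exp ∘ ω_M` is the supremum of the terms `t^j / M_j` of the series
`E_M(t) = ∑ t^j / M_j`, so `exp (ω_M t) ≤ E_M(t)`. Conversely, the terms of `E_M(a * z)` are at most
`exp (ω_M |z|) * |a|^j` in modulus, so `|E_M(a * z)| ≤ exp (ω_M |z|) / (1 - |a|)` for `|a| < 1`.
Since `θ_{M,c}(z) = E_M(c * z / 2)`, the case `a = 1 / 2` yields the upper bound. -/

theorem differentiable_tsum_mul_pow {a : ℕ → ℂ}
    (ha : ∀ r : ℝ, 0 ≤ r → Summable fun j ↦ ‖a j‖ * r ^ j) :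
    Differentiable ℂ fun z ↦ ∑' j, a j * z ^ j := by
  intro z
  have hz : z ∈ Metric.ball (0 : ℂ) (‖z‖ + 1) := by simp
  refine (Complex.differentiableOn_tsum_of_summable_norm (ha (‖z‖ + 1) (by positivity))
    (fun j ↦ by fun_prop) Metric.isOpen_ball fun j w hw ↦ ?_).differentiableAt
    (Metric.isOpen_ball.mem_nhds hz)
  rw [norm_mul, norm_pow]
  gcongr
  exact (mem_ball_zero_iff.mp hw).le

theorem norm_pow_div_ofReal (z : ℂ) (j : ℕ) {m : ℝ} (hm : 0 ≤ m) :
    ‖z ^ j / (m : ℂ)‖ = ‖z‖ ^ j / m := by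
  rw [norm_div, norm_pow, Complex.norm_of_nonneg hm]

theorem mul_vMc_le_iff {M : ℕ → ℝ} {c t x C : ℝ} :
    x * vMc M c t ≤ C ↔ x ≤ C * Real.exp (omegaM M (c * t)) := by
  rw [vMc, Real.exp_neg, ← div_eq_mul_inv, div_le_iff₀ (Real.exp_pos _)]

/-- The power series `E_M(z) = ∑ z^j / M_j`, of which `θ_{M,c}` is a rescaling. -/
noncomputable def weightSeries (M : ℕ → ℝ) (z : ℂ) : ℂ :=
  ∑' j, z ^ j / (M j : ℂ)

namespace WeightSeq

variable {M : ℕ → ℝ} {t : ℝ}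

theorem eventually_pow_le (hM : WeightSeq M) (ht : 0 ≤ t) : ∀ᶠ j in atTop, t ^ j ≤ M j := by
  obtain ⟨hpos, -, hlim⟩ := hM
  filter_upwards [hlim.eventually_ge_atTop t, eventually_ne_atTop 0] with j hj hj0
  calc t ^ j ≤ (M j ^ (1 / (j : ℝ))) ^ j := by gcongr
    _ = M j := by rw [one_div, Real.rpow_inv_natCast_pow (hpos j).le hj0]

theorem bddAbove_range_log (hM : WeightSeq M) (ht : 0 ≤ t) :
    BddAbove (range fun j : ℕ ↦ Real.log (t ^ j / M j)) := by
  refine IsBoundedUnder.bddAbove_range ⟨0, eventually_map.mpr ?_⟩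
  filter_upwards [hM.eventually_pow_le ht] with j hj
  have hMj := hM.1 j
  exact Real.log_nonpos (by positivity) ((div_le_one hMj).mpr hj)

theorem isLUB_exp_omegaM (hM : WeightSeq M) (ht : 0 ≤ t) :
    IsLUB (range fun j : ℕ ↦ t ^ j / M j) (Real.exp (omegaM M t)) := by
  obtain rfl | ht := ht.eq_or_lt
  · refine IsGreatest.isLUB ⟨⟨0, by simp [omegaM, hM.2.1]⟩, forall_mem_range.mpr fun j ↦ ?_⟩
    obtain rfl | hj := eq_or_ne j 0
    · simp [omegaM, hM.2.1]
    · simp [omegaM, hj]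
  have hterm (j : ℕ) : 0 < t ^ j / M j := div_pos (pow_pos ht j) (hM.1 j)
  rw [omegaM, if_neg ht.ne']
  refine ⟨forall_mem_range.mpr fun j ↦ ?_, fun b hb ↦ ?_⟩
  · exact (Real.log_le_iff_le_exp (hterm j)).mp (le_ciSup (hM.bddAbove_range_log ht.le) j)
  · have hb' : ∀ j, t ^ j / M j ≤ b := forall_mem_range.mp hb
    rw [← Real.le_log_iff_exp_le ((hterm 0).trans_le (hb' 0))]
    exact ciSup_le fun j ↦ Real.log_le_log (hterm j) (hb' j)

theorem mul_pow_div_le (hM : WeightSeq M) {r : ℝ} (hr : 0 ≤ r) (ht : 0 ≤ t) (j : ℕ) :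
    (r * t) ^ j / M j ≤ Real.exp (omegaM M t) * r ^ j := by
  have hterm : t ^ j / M j ≤ Real.exp (omegaM M t) := (hM.isLUB_exp_omegaM ht).1 ⟨j, rfl⟩
  calc (r * t) ^ j / M j = t ^ j / M j * r ^ j := by ring
    _ ≤ Real.exp (omegaM M t) * r ^ j := by gcongr

theorem summable_pow_div (hM : WeightSeq M) (ht : 0 ≤ t) : Summable fun j ↦ t ^ j / M j := by
  refine Summable.of_nonneg_of_le (fun j ↦ div_nonneg (pow_nonneg ht j) (hM.1 j).le) (fun j ↦ ?_)
    (summable_geometric_two.mul_left (Real.exp (omegaM M (2 * t))))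
  simpa using hM.mul_pow_div_le one_half_pos.le (mul_nonneg zero_le_two ht) j

theorem exp_omegaM_le_tsum (hM : WeightSeq M) (ht : 0 ≤ t) :
    Real.exp (omegaM M t) ≤ ∑' j, t ^ j / M j :=
  (isLUB_le_iff (hM.isLUB_exp_omegaM ht)).mpr <| forall_mem_range.mpr fun j ↦
    (hM.summable_pow_div ht).le_tsum j fun i _ ↦ div_nonneg (pow_nonneg ht i) (hM.1 i).le

theorem summable_pow_div_ofReal (hM : WeightSeq M) (z : ℂ) :
    Summable fun j ↦ z ^ j / (M j : ℂ) := by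
  refine .of_norm ?_
  simpa only [norm_pow_div_ofReal _ _ (hM.1 _).le] using hM.summable_pow_div (norm_nonneg z)

theorem differentiable_weightSeries (hM : WeightSeq M) : Differentiable ℂ (weightSeries M) := by
  have hcoeff (r : ℝ) (hr : 0 ≤ r) : Summable fun j ↦ ‖(M j : ℂ)⁻¹‖ * r ^ j := by
    simpa only [norm_inv, Complex.norm_of_nonneg (hM.1 _).le, ← div_eq_inv_mul]
      using hM.summable_pow_div hr
  change Differentiable ℂ fun z : ℂ ↦ ∑' j, z ^ j / (M j : ℂ)
  simpa only [← div_eq_inv_mul] using differentiable_tsum_mul_pow hcoeff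

theorem norm_weightSeries_mul_le (hM : WeightSeq M) {a : ℂ} (ha : ‖a‖ < 1) (z : ℂ) :
    ‖weightSeries M (a * z)‖ ≤ Real.exp (omegaM M ‖z‖) / (1 - ‖a‖) := by
  refine tsum_of_norm_bounded
    ((hasSum_geometric_of_lt_one (norm_nonneg a) ha).mul_left _) fun j ↦ ?_
  rw [norm_pow_div_ofReal _ _ (hM.1 j).le, norm_mul]
  exact hM.mul_pow_div_le (norm_nonneg a) (norm_nonneg z) j

theorem norm_weightSeries_div_two_le (hM : WeightSeq M) (z : ℂ) :
    ‖weightSeries M (z / 2)‖ ≤ 2 * Real.exp (omegaM M ‖z‖) := by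
  have hhalf : ‖(2⁻¹ : ℂ)‖ = 1 / 2 := by simp
  calc ‖weightSeries M (z / 2)‖ = ‖weightSeries M (2⁻¹ * z)‖ := by rw [div_eq_inv_mul]
    _ ≤ Real.exp (omegaM M ‖z‖) / (1 - ‖(2⁻¹ : ℂ)‖) :=
      hM.norm_weightSeries_mul_le (hhalf.trans_lt one_half_lt_one) z
    _ = 2 * Real.exp (omegaM M ‖z‖) := by rw [hhalf]; ring

theorem exp_omegaM_le_norm_weightSeries (hM : WeightSeq M) (ht : 0 ≤ t) :
    Real.exp (omegaM M t) ≤ ‖weightSeries M t‖ :=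
  calc Real.exp (omegaM M t) ≤ ∑' j, t ^ j / M j := hM.exp_omegaM_le_tsum ht
    _ ≤ ‖((∑' j, t ^ j / M j : ℝ) : ℂ)‖ := by
      rw [Complex.norm_real]
      exact Real.le_norm_self _
    _ = ‖weightSeries M t‖ := by
      simp only [weightSeries, Complex.ofReal_tsum, Complex.ofReal_div, Complex.ofReal_pow]

end WeightSeq

/-- Lemma: for a weight sequence `M` and `c > 0`, the series
`θ_{M,c}(z) = Σ_j (c·z)^j/(2^j·M_j)` converges everywhere, defines an entire
function with `|θ_{M,c}(z)| ≤ 2·exp(ω_M(c·|z|))` (so `θ_{M,c} ∈ H^∞_{v_{M,c}}`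
with norm at most `2`) and `θ_{M,c}(t) ≥ exp(ω_M(c·t/2))` for `t ≥ 0`. -/
theorem stmt7 (M : ℕ → ℝ) (hM : WeightSeq M) (c : ℝ) (hc : 0 < c) :
    (∀ z : ℂ,
      Summable fun j : ℕ => ((c : ℂ) * z) ^ j / ((2 : ℂ) ^ j * (M j : ℂ))) ∧
    Differentiable ℂ
      (fun z : ℂ => ∑' j : ℕ, ((c : ℂ) * z) ^ j / ((2 : ℂ) ^ j * (M j : ℂ))) ∧
    (∀ z : ℂ,
      ‖∑' j : ℕ, ((c : ℂ) * z) ^ j / ((2 : ℂ) ^ j * (M j : ℂ))‖ ≤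
        2 * Real.exp (omegaM M (c * ‖z‖))) ∧
    ((fun z : ℂ => ∑' j : ℕ, ((c : ℂ) * z) ^ j / ((2 : ℂ) ^ j * (M j : ℂ))) ∈
        Hinf (vMc M c) ∧
      wnorm (vMc M c)
        (fun z : ℂ => ∑' j : ℕ, ((c : ℂ) * z) ^ j / ((2 : ℂ) ^ j * (M j : ℂ))) ≤ 2) ∧
    (∀ t : ℝ, 0 ≤ t →
      Real.exp (omegaM M (c * t / 2)) ≤
        ‖∑' j : ℕ, ((c : ℂ) * (t : ℂ)) ^ j / ((2 : ℂ) ^ j * (M j : ℂ))‖) := by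
  have hterm (z : ℂ) (j : ℕ) :
      (c * z) ^ j / ((2 : ℂ) ^ j * (M j : ℂ)) = (c * z / 2) ^ j / (M j : ℂ) := by
    rw [div_pow, div_div]
  simp only [hterm]
  have hdiff : Differentiable ℂ fun z : ℂ ↦ weightSeries M (c * z / 2) :=
    hM.differentiable_weightSeries.comp (by fun_prop)
  have hbound (z : ℂ) :
      ‖weightSeries M (c * z / 2)‖ ≤ 2 * Real.exp (omegaM M (c * ‖z‖)) := by
    simpa only [norm_mul, Complex.norm_of_nonneg hc.le]
      using hM.norm_weightSeries_div_two_le (c * z)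
  have hweighted (z : ℂ) : ‖weightSeries M (c * z / 2)‖ * vMc M c ‖z‖ ≤ 2 :=
    mul_vMc_le_iff.mpr (hbound z)
  refine ⟨fun z ↦ hM.summable_pow_div_ofReal _, hdiff, hbound,
    ⟨⟨hdiff, 2, hweighted⟩, ciSup_le hweighted⟩, fun t ht ↦ ?_⟩
  simpa [weightSeries] using hM.exp_omegaM_le_norm_weightSeries (t := c * t / 2) (by positivity)
end

section
/- Let M, N ∈ LC. Then the following are equivalent: (i) there exist c ∈ ℕ, c ≥ 1, and A ≥ 1 such that N_j ≤ A·(M_{c·j})^{1/c} for all j ∈ ℕ; (ii) there exist c, c₁ ∈ ℕ, c, c₁ ≥ 1, and C ≥ 1 such that (N_{c·j})^{1/c} ≤ C·(M_{c₁·j})^{1/c₁} for all j ∈ ℕ; (iii) for every d ∈ ℕ, d ≥ 1, there exist c ∈ ℕ, c ≥ 1, and C ≥ 1 such that (N_{d·j})^{1/d} ≤ C·(M_{c·j})^{1/c} for all j ∈ ℕ. -/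
open Filter Set

/-!
A positive log-convex sequence has non-decreasing quotients `N (j + 1) / N j`, so if `N 0 = 1` it is
supermultiplicative and `N j ≤ N (c * j) ^ (1 / c)`. Hence a bound for the rescaled sequence
`N (c * j) ^ (1 / c)` is already one for `N j`. Conversely, a bound for `N j` gives one for
`N (d * j) ^ (1 / d)` by evaluating it at `d * j` and taking `d`-th roots, which turns the
parameter `c` of `M` into `c * d`.
-/

theorem LogConvexSeq.monotone_div {N : ℕ → ℝ} (hN : LogConvexSeq N) (hpos : ∀ j, 0 < N j) :
    Monotone fun j => N (j + 1) / N j := by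
  refine monotone_nat_of_le_succ fun j => ?_
  rw [div_le_div_iff₀ (hpos j) (hpos (j + 1)), ← sq, mul_comm]
  exact hN (j + 1) j.succ_pos

theorem LogConvexSeq.mul_le_zero_mul_add {N : ℕ → ℝ} (hN : LogConvexSeq N)
    (hpos : ∀ j, 0 < N j) (j k : ℕ) : N j * N k ≤ N 0 * N (j + k) := by
  induction k with
  | zero => exact (mul_comm _ _).le
  | succ k ih =>
    have hquot : N (k + 1) / N k ≤ N (j + k + 1) / N (j + k) :=
      hN.monotone_div hpos (Nat.le_add_left k j)
    calc N j * N (k + 1)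
        = N j * N k * (N (k + 1) / N k) := by rw [mul_assoc, mul_div_cancel₀ _ (hpos k).ne']
      _ ≤ N 0 * N (j + k) * (N (j + k + 1) / N (j + k)) :=
        mul_le_mul ih hquot (div_pos (hpos _) (hpos _)).le (mul_pos (hpos _) (hpos _)).le
      _ = N 0 * N (j + (k + 1)) := by
        rw [mul_assoc, mul_div_cancel₀ _ (hpos (j + k)).ne', add_assoc]

theorem LogConvexSeq.mul_le_add {N : ℕ → ℝ} (hN : LogConvexSeq N) (hpos : ∀ j, 0 < N j)
    (hzero : N 0 ≤ 1) (j k : ℕ) : N j * N k ≤ N (j + k) :=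
  (hN.mul_le_zero_mul_add hpos j k).trans (mul_le_of_le_one_left (hpos _).le hzero)

theorem pow_le_nsmul_of_mul_le_add {A R : Type*} [AddMonoid A] [MonoidWithZero R] [Preorder R]
    [MulPosMono R] {f : A → R} (hf : ∀ a b, f a * f b ≤ f (a + b)) {a : A} (ha : 0 ≤ f a)
    {n : ℕ} (hn : 1 ≤ n) : f a ^ n ≤ f (n • a) := by
  induction n, hn using Nat.le_induction with
  | base => rw [pow_one, one_nsmul]
  | succ n _ ih =>
    calc f a ^ (n + 1) = f a ^ n * f a := pow_succ _ _
      _ ≤ f (n • a) * f a := mul_le_mul_of_nonneg_right ih ha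
      _ ≤ f (n • a + a) := hf _ _
      _ = f ((n + 1) • a) := by rw [succ_nsmul]

theorem le_nsmul_rpow_one_div_of_mul_le_add {A : Type*} [AddMonoid A] {f : A → ℝ}
    (hf : ∀ a b, f a * f b ≤ f (a + b)) (hnonneg : ∀ a, 0 ≤ f a) (a : A) {n : ℕ} (hn : 1 ≤ n) :
    f a ≤ f (n • a) ^ (1 / (n : ℝ)) := by
  rw [one_div, Real.le_rpow_inv_iff_of_pos (hnonneg a) (hnonneg _) (Nat.cast_pos.2 hn),
    Real.rpow_natCast]
  exact pow_le_nsmul_of_mul_le_add hf (hnonneg a) hn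

theorem rpow_one_div_le_of_le_mul_rpow_one_div {x y A c d : ℝ} (hx : 0 ≤ x) (hy : 0 ≤ y)
    (hA : 0 ≤ A) (hd : 0 ≤ d) (h : x ≤ A * y ^ (1 / c)) :
    x ^ (1 / d) ≤ A ^ (1 / d) * y ^ (1 / (c * d)) :=
  calc x ^ (1 / d) ≤ (A * y ^ (1 / c)) ^ (1 / d) :=
        Real.rpow_le_rpow hx h (one_div_nonneg.2 hd)
    _ = A ^ (1 / d) * y ^ (1 / (c * d)) := by
        rw [Real.mul_rpow hA (Real.rpow_nonneg hy _), ← Real.rpow_mul hy, one_div_mul_one_div]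

theorem stmt10_general {M N : ℕ → ℝ} (hM : ∀ j, 0 ≤ M j) (hN : ∀ j, 0 ≤ N j)
    (hmul : ∀ j k, N j * N k ≤ N (j + k)) :
    List.TFAE [
      ∃ c : ℕ, 1 ≤ c ∧ ∃ A : ℝ, 1 ≤ A ∧
        ∀ j : ℕ, N j ≤ A * (M (c * j)) ^ (1 / (c : ℝ)),
      ∃ c c₁ : ℕ, 1 ≤ c ∧ 1 ≤ c₁ ∧ ∃ C : ℝ, 1 ≤ C ∧
        ∀ j : ℕ, (N (c * j)) ^ (1 / (c : ℝ)) ≤ C * (M (c₁ * j)) ^ (1 / (c₁ : ℝ)),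
      ∀ d : ℕ, 1 ≤ d → ∃ c : ℕ, 1 ≤ c ∧ ∃ C : ℝ, 1 ≤ C ∧
        ∀ j : ℕ, (N (d * j)) ^ (1 / (d : ℝ)) ≤ C * (M (c * j)) ^ (1 / (c : ℝ))] := by
  tfae_have 1 → 3 := by
    rintro ⟨c, hc, A, hA, h⟩ d hd
    refine ⟨c * d, Nat.mul_pos hc hd, A ^ (1 / (d : ℝ)),
      Real.one_le_rpow hA (by positivity), fun j => ?_⟩
    rw [mul_assoc, Nat.cast_mul]
    exact rpow_one_div_le_of_le_mul_rpow_one_div (hN _) (hM _) (zero_le_one.trans hA)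
      d.cast_nonneg (h (d * j))
  tfae_have 3 → 2 := fun h =>
    let ⟨c, hc, hbound⟩ := h 1 le_rfl
    ⟨1, c, le_rfl, hc, hbound⟩
  tfae_have 2 → 1 := fun ⟨_, c₁, hc, hc₁, C, hC, h⟩ =>
    ⟨c₁, hc₁, C, hC, fun j => (le_nsmul_rpow_one_div_of_mul_le_add hmul hN j hc).trans (h j)⟩
  tfae_finish

/-- Lemma: for `M, N ∈ LC`, the conditions
`N_j ≤ A·(M_{cj})^{1/c}` (some `c`), `(N_{cj})^{1/c} ≤ C·(M_{c₁j})^{1/c₁}`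
(some `c, c₁`) and the version universally quantified in `d` are equivalent. -/
theorem stmt10 (M N : ℕ → ℝ) (hM : LCset M) (hN : LCset N) :
    ((∃ c : ℕ, 1 ≤ c ∧ ∃ A : ℝ, 1 ≤ A ∧
        ∀ j : ℕ, N j ≤ A * (M (c * j)) ^ (1 / (c : ℝ))) ↔
      (∃ c c₁ : ℕ, 1 ≤ c ∧ 1 ≤ c₁ ∧ ∃ C : ℝ, 1 ≤ C ∧
        ∀ j : ℕ, (N (c * j)) ^ (1 / (c : ℝ)) ≤ C * (M (c₁ * j)) ^ (1 / (c₁ : ℝ)))) ∧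
    ((∃ c : ℕ, 1 ≤ c ∧ ∃ A : ℝ, 1 ≤ A ∧
        ∀ j : ℕ, N j ≤ A * (M (c * j)) ^ (1 / (c : ℝ))) ↔
      (∀ d : ℕ, 1 ≤ d → ∃ c : ℕ, 1 ≤ c ∧ ∃ C : ℝ, 1 ≤ C ∧
        ∀ j : ℕ, (N (d * j)) ^ (1 / (d : ℝ)) ≤ C * (M (c * j)) ^ (1 / (c : ℝ)))) := by
  have htfae := stmt10_general (fun j => (hM.1.1 j).le) (fun j => (hN.1.1 j).le)
    (hN.2.1.mul_le_add hN.1.1 hN.1.2.1.le)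
  exact ⟨htfae.out 0 1, htfae.out 0 2⟩
end

section
/- Let u be a normalized convex weight. Then: (i) there exists B ≥ 1 such that u(t) ≤ ũ(t) ≤ B·u(t)^{1/2} for all t ≥ 0; (ii) if in addition u is of moderate growth, then there exist B ≥ 1 and H ≥ 1 such that u(t) ≤ ũ(t) ≤ B·u(t/H) for all t ≥ 0. -/
open Filter Set

/-!
The bound `u ≤ ũ` only needs one nowhere vanishing member of `B_{1/u}(ℂ)`, a constant. For
`ũ ≤ B·u^{1/2}` put `φ(s) = -log u(eˢ)`, which is convex and bounded below by `m = -log u(0)`, and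
let `φ(s₀) + p(s - s₀)` be a supporting line. Since `⌊p⌋ ≥ p/2` for `p ≥ 1`, a convex combination
of this line and the constant `m` is a minorant of `φ` whose slope is the integer `j = ⌊p⌋` and
whose value at `s₀` is at least `(φ(s₀) + m)/2`. Exponentiating it, with `t = e^{s₀}`, shows that
`(u(0)·u(t))^{-1/2}·(z/t)ʲ` belongs to `B_{1/u}(ℂ)`. Decay faster than `1/t` forces `p ≥ 1` for
large `t`; smaller `t` only affect the constant. Moderate growth turns `u(t)^{1/2}` into `u(t/H)`.
-/

theorem add_rightDeriv_mul_sub_le {S : Set ℝ} {φ : ℝ → ℝ} (hφ : ConvexOn ℝ S φ) {x y : ℝ}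
    (hx : x ∈ interior S) (hy : y ∈ S) : φ x + derivWithin φ (Ioi x) x * (y - x) ≤ φ y := by
  rcases lt_trichotomy y x with hyx | rfl | hxy
  · have hslope := (hφ.slope_le_leftDeriv_of_mem_interior hy hx hyx).trans
      (hφ.leftDeriv_le_rightDeriv_of_mem_interior hx)
    rw [slope_def_field, div_le_iff₀ (by linarith)] at hslope
    linarith
  · simp
  · have hslope := hφ.rightDeriv_le_slope_of_mem_interior hx hy hxy
    rw [slope_def_field, le_div_iff₀ (by linarith)] at hslope
    linarith

theorem half_add_floor_mul_le {a m p d y : ℝ} (hp : 1 ≤ p) (hma : m ≤ a) (hmy : m ≤ y)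
    (hline : a + p * d ≤ y) : (a + m) / 2 + ⌊p⌋₊ * d ≤ y := by
  set r : ℝ := ⌊p⌋₊ / p with hr
  have hp0 : 0 < p := by linarith
  have hfloor : (1 : ℝ) ≤ ⌊p⌋₊ := by exact_mod_cast (Nat.one_le_floor_iff p).2 hp
  have hr_half : 1 / 2 ≤ r := by
    rw [hr, le_div_iff₀ hp0]
    linarith [Nat.lt_floor_add_one p]
  have hr_one : r ≤ 1 := (div_le_one hp0).2 (Nat.floor_le hp0.le)
  have hrp : r * p = ⌊p⌋₊ := div_mul_cancel₀ _ hp0.ne'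
  calc (a + m) / 2 + ⌊p⌋₊ * d
      ≤ r * a + (1 - r) * m + ⌊p⌋₊ * d := by nlinarith
    _ = r * (a + p * d) + (1 - r) * m := by rw [← hrp]; ring
    _ ≤ r * y + (1 - r) * y := by
        gcongr
    _ = y := by ring

theorem exists_nat_slope_minorant {φ : ℝ → ℝ} (hφ : ConvexOn ℝ univ φ) {m : ℝ}
    (hm : ∀ s, m ≤ φ s) {s₁ s₀ : ℝ} (hlt : s₁ < s₀) (hrise : s₀ - s₁ ≤ φ s₀ - φ s₁) :
    ∃ j : ℕ, j ≠ 0 ∧ ∀ s, (φ s₀ + m) / 2 + j * (s - s₀) ≤ φ s := by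
  set p := derivWithin φ (Ioi s₀) s₀
  have hline (s : ℝ) : φ s₀ + p * (s - s₀) ≤ φ s :=
    add_rightDeriv_mul_sub_le hφ (by simp) (mem_univ s)
  have hp : 1 ≤ p := le_of_mul_le_mul_right (by linarith [hline s₁]) (sub_pos.2 hlt)
  exact ⟨⌊p⌋₊, (Nat.floor_pos.2 hp).ne', fun s ↦
    half_add_floor_mul_le hp (hm s₀) (hm s) (hline s)⟩

section AssociatedWeight

variable {u : ℝ → ℝ}

theorem norm_le_wTilde {f : ℂ → ℂ} (hf : f ∈ BClass u) (z : ℂ) : ‖f z‖ ≤ wTilde u z :=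
  le_csSup ⟨1 / u ‖z‖, by rintro _ ⟨g, hg, rfl⟩; exact hg.2 z⟩ ⟨f, hf, rfl⟩

theorem vTilde_le_one_div_norm {f : ℂ → ℂ} (hf : f ∈ BClass u) {t : ℝ} (hft : f t ≠ 0) :
    vTilde u t ≤ 1 / ‖f t‖ :=
  one_div_le_one_div_of_le (norm_pos_iff.2 hft) (norm_le_wTilde hf t)

theorem le_vTilde {f : ℂ → ℂ} (hf : f ∈ BClass u) {t : ℝ} (ht : 0 ≤ t) (hut : 0 < u t)
    (hft : f t ≠ 0) : u t ≤ vTilde u t := by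
  have hpos : 0 < wTilde u t := (norm_pos_iff.2 hft).trans_le (norm_le_wTilde hf t)
  refine (le_one_div hut hpos).2 (csSup_le ⟨_, f, hf, rfl⟩ ?_)
  rintro _ ⟨g, hg, rfl⟩
  simpa only [Complex.norm_of_nonneg ht] using hg.2 t

theorem const_mem_BClass (hpos : ∀ t, 0 ≤ t → 0 < u t) (hanti : AntitoneOn u (Ici 0)) :
    (fun _ : ℂ ↦ ((u 0)⁻¹ : ℂ)) ∈ BClass u := by
  refine ⟨differentiable_const _, fun z ↦ ?_⟩
  rw [norm_inv, Complex.norm_of_nonneg (hpos 0 le_rfl).le, ← one_div]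
  exact one_div_le_one_div_of_le (hpos _ (norm_nonneg z))
    (hanti self_mem_Ici (norm_nonneg z) (norm_nonneg z))

theorem vTilde_le_apply_zero (hpos : ∀ t, 0 ≤ t → 0 < u t) (hanti : AntitoneOn u (Ici 0))
    (t : ℝ) : vTilde u t ≤ u 0 := by
  have hu0 := hpos 0 le_rfl
  simpa [abs_of_pos hu0] using
    vTilde_le_one_div_norm (t := t) (const_mem_BClass hpos hanti) (by simp [hu0.ne'])

theorem vTilde_le_of_pow_le {a t : ℝ} (ha : 0 < a) (ht : 0 < t) {j : ℕ}
    (h : ∀ r, 0 ≤ r → (r / t) ^ j ≤ a / u r) : vTilde u t ≤ a := by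
  have hmem : (fun z : ℂ ↦ (a⁻¹ : ℂ) * (z / t) ^ j) ∈ BClass u := by
    refine ⟨by fun_prop, fun z ↦ ?_⟩
    rw [norm_mul, norm_pow, norm_div, norm_inv, Complex.norm_of_nonneg ha.le,
      Complex.norm_of_nonneg ht.le]
    calc a⁻¹ * (‖z‖ / t) ^ j ≤ a⁻¹ * (a / u ‖z‖) := by
          gcongr
          exact h _ (norm_nonneg z)
      _ = 1 / u ‖z‖ := by field_simp
  have hat : (a⁻¹ : ℂ) * ((t : ℂ) / t) ^ j = (a⁻¹ : ℝ) := by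
    simp [div_self (Complex.ofReal_ne_zero.2 ht.ne')]
  have hle := vTilde_le_one_div_norm (t := t) hmem (by simp [ha.ne', ht.ne'])
  rwa [hat, Complex.norm_of_nonneg (inv_nonneg.2 ha.le), one_div, inv_inv] at hle

theorem exists_pow_le_sqrt_div (hpos : ∀ t, 0 ≤ t → 0 < u t) (hanti : AntitoneOn u (Ici 0))
    (hconv : ConvexWeight u) {t : ℝ} (ht : 1 < t) (hdecay : t * u t ≤ u 1) :
    ∃ j : ℕ, ∀ r, 0 ≤ r → (r / t) ^ j ≤ √(u 0 * u t) / u r := by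
  have ht0 : 0 < t := by linarith
  have hu0 := hpos 0 le_rfl
  have hut := hpos t ht0.le
  have hlower (s : ℝ) : -Real.log (u 0) ≤ -Real.log (u (Real.exp s)) :=
    neg_le_neg (Real.log_le_log (hpos _ (Real.exp_nonneg s))
      (hanti self_mem_Ici (Real.exp_nonneg s) (Real.exp_nonneg s)))
  have hrise : Real.log t - 0
      ≤ -Real.log (u (Real.exp (Real.log t))) - -Real.log (u (Real.exp 0)) := by
    have hlog := Real.log_le_log (mul_pos ht0 hut) hdecay
    rw [Real.log_mul ht0.ne' hut.ne'] at hlog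
    rw [Real.exp_log ht0, Real.exp_zero]
    linarith
  obtain ⟨j, hj, hline⟩ := exists_nat_slope_minorant hconv hlower (Real.log_pos ht) hrise
  refine ⟨j, fun r hr ↦ ?_⟩
  have hur := hpos r hr
  rcases hr.eq_or_lt with rfl | hr0
  · rw [zero_div, zero_pow hj]
    positivity
  · have hlog := hline (Real.log r)
    rw [Real.exp_log hr0, Real.exp_log ht0] at hlog
    rw [← Real.log_le_log_iff (by positivity) (by positivity), Real.log_pow,
      Real.log_div hr0.ne' ht0.ne', Real.log_div (by positivity) hur.ne',
      Real.log_sqrt (by positivity), Real.log_mul hu0.ne' hut.ne']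
    linarith

theorem vTilde_le_sqrt_mul (hpos : ∀ t, 0 ≤ t → 0 < u t) (hanti : AntitoneOn u (Ici 0))
    (hconv : ConvexWeight u) {t : ℝ} (ht : 1 < t) (hdecay : t * u t ≤ u 1) :
    vTilde u t ≤ √(u 0 * u t) := by
  have ht0 : 0 < t := by linarith
  obtain ⟨j, hj⟩ := exists_pow_le_sqrt_div hpos hanti hconv ht hdecay
  exact vTilde_le_of_pow_le (Real.sqrt_pos.2 (mul_pos (hpos 0 le_rfl) (hpos t ht0.le))) ht0 hj

theorem exists_vTilde_le_mul_sqrt (hpos : ∀ t, 0 ≤ t → 0 < u t) (hanti : AntitoneOn u (Ici 0))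
    (hdecay : Tendsto (fun t ↦ t * u t) atTop (nhds 0)) (hconv : ConvexWeight u) :
    ∃ B : ℝ, 1 ≤ B ∧ ∀ t, 0 ≤ t → vTilde u t ≤ B * √(u t) := by
  obtain ⟨T, hT, hTdecay⟩ : ∃ T : ℝ, 0 ≤ T ∧ ∀ t, T < t → 1 < t ∧ t * u t ≤ u 1 := by
    have hev := (eventually_gt_atTop 1).and (hdecay.eventually_le_const (hpos 1 zero_le_one))
    obtain ⟨T, hT⟩ := eventually_atTop.1 hev
    exact ⟨max T 0, le_max_right _ _, fun t ht ↦ hT t ((le_max_left _ _).trans ht.le)⟩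
  have hu0 := hpos 0 le_rfl
  have huT := hpos T hT
  refine ⟨max 1 (max (u 0 / √(u T)) √(u 0)), le_max_left _ _, fun t ht ↦ ?_⟩
  rcases le_or_gt t T with htT | htT
  · calc vTilde u t ≤ u 0 := vTilde_le_apply_zero hpos hanti t
      _ = u 0 / √(u T) * √(u T) := by field_simp
      _ ≤ u 0 / √(u T) * √(u t) := by
          gcongr
          exact hanti ht hT htT
      _ ≤ _ := by
          gcongr
          exact (le_max_left _ _).trans (le_max_right _ _)
  · obtain ⟨ht1, htdecay⟩ := hTdecay t htT
    calc vTilde u t ≤ √(u 0 * u t) := vTilde_le_sqrt_mul hpos hanti hconv ht1 htdecay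
      _ = √(u 0) * √(u t) := Real.sqrt_mul hu0.le _
      _ ≤ _ := by
          gcongr
          exact (le_max_right _ _).trans (le_max_right _ _)

theorem exists_sqrt_le_mul_apply_div (hpos : ∀ t, 0 ≤ t → 0 < u t) (hmg : ModerateGrowthW u) :
    ∃ A : ℝ, 1 ≤ A ∧ ∃ H : ℝ, 1 ≤ H ∧ ∀ t, 0 ≤ t → √(u t) ≤ A * u (t / H) := by
  obtain ⟨H, hH, hgrowth⟩ := hmg
  refine ⟨√(Real.exp H), Real.one_le_sqrt.2 (Real.one_le_exp (by linarith)), H, hH,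
    fun t ht ↦ ?_⟩
  have htH : 0 ≤ t / H := by positivity
  calc √(u t) = √(u (H * (t / H))) := by rw [mul_div_cancel₀ t (by linarith : H ≠ 0)]
    _ ≤ √(Real.exp H * u (t / H) ^ 2) := Real.sqrt_le_sqrt (hgrowth _ htH)
    _ = √(Real.exp H) * u (t / H) := by
        rw [Real.sqrt_mul (Real.exp_nonneg H), Real.sqrt_sq (hpos _ htH).le]

end AssociatedWeight

theorem stmt15_general (u : ℝ → ℝ) (hpos : ∀ t, 0 ≤ t → 0 < u t) (hanti : AntitoneOn u (Ici 0))
    (hdecay : Tendsto (fun t ↦ t * u t) atTop (nhds 0)) (hconv : ConvexWeight u) :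
    (∃ B : ℝ, 1 ≤ B ∧ ∀ t : ℝ, 0 ≤ t →
      u t ≤ vTilde u t ∧ vTilde u t ≤ B * (u t) ^ ((1 : ℝ) / 2)) ∧
    (ModerateGrowthW u →
      ∃ B : ℝ, 1 ≤ B ∧ ∃ H : ℝ, 1 ≤ H ∧ ∀ t : ℝ, 0 ≤ t →
        u t ≤ vTilde u t ∧ vTilde u t ≤ B * u (t / H)) := by
  have hlower (t : ℝ) (ht : 0 ≤ t) : u t ≤ vTilde u t :=
    le_vTilde (const_mem_BClass hpos hanti) ht (hpos t ht) (by simp [(hpos 0 le_rfl).ne'])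
  obtain ⟨B, hB, hupper⟩ := exists_vTilde_le_mul_sqrt hpos hanti hdecay hconv
  simp only [← Real.sqrt_eq_rpow]
  refine ⟨⟨B, hB, fun t ht ↦ ⟨hlower t ht, hupper t ht⟩⟩, fun hmg ↦ ?_⟩
  obtain ⟨A, hA, H, hH, hsqrt⟩ := exists_sqrt_le_mul_apply_div hpos hmg
  refine ⟨B * A, one_le_mul_of_one_le_of_one_le hB hA, H, hH, fun t ht ↦ ⟨hlower t ht, ?_⟩⟩
  calc vTilde u t ≤ B * √(u t) := hupper t ht
    _ ≤ B * (A * u (t / H)) := by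
        gcongr
        exact hsqrt t ht
    _ = B * A * u (t / H) := by ring

/-- Theorem: for a normalized convex weight `u`: (i) `u ≤ ũ ≤ B·u^{1/2}`;
(ii) if `u` is of moderate growth, then `u ≤ ũ ≤ B·u(·/H)`. -/
theorem stmt15 (u : ℝ → ℝ) (hu : IsWeight u) (hun : NormalizedWeight u)
    (huc : ConvexWeight u) :
    (∃ B : ℝ, 1 ≤ B ∧ ∀ t : ℝ, 0 ≤ t →
      u t ≤ vTilde u t ∧ vTilde u t ≤ B * (u t) ^ ((1 : ℝ) / 2)) ∧
    (ModerateGrowthW u →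
      ∃ B : ℝ, 1 ≤ B ∧ ∃ H : ℝ, 1 ≤ H ∧ ∀ t : ℝ, 0 ≤ t →
        u t ≤ vTilde u t ∧ vTilde u t ≤ B * u (t / H)) :=
  stmt15_general u hu.1 hu.2.2.1 (by simpa only [pow_one] using hu.2.2.2 1) huc
end
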